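/- arXiv:1805.03624 — 2 statements merged into one kernel-verified Lean document; each statement's English description precedes it below -/
import Mathlib

section
/- Let X, Y ∈ ℕ with X ≠ Y, and let n be the smallest index with [q_n](X) ≠ [q_n](Y). If n is even, then f_α(X) < f_α(Y) if and only if [q_n](X) < [q_n](Y); if n is odd, then f_α(X) < f_α(Y) if and only if [q_n](X) > [q_n](Y). -/
/-!
Write `E 0 = 1` and `E (n+1) = E n / θ (n+1)`, where `θ n` are the complete quotients of `α`.
These are positive, satisfy `E n = a (n+1) * E (n+1) + E (n+2)`, and
`q n * α - p n = (-1) ^ n * E (n+1)`. Hence, for digits `d` of `X`, the alternating sum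
`g X = ∑ k, (-1) ^ k * d k * E (k+1)` differs from `α * X` by an integer.

Let `T n` be the part of this sum from index `n` on, normalised so that its first term has a
positive sign; thus `T n = d n * E (n+1) - T (n+1)`. Going down from the last digit one gets
`-E (n+1) < T n < E n` (`tail_bounds`), and `T n < E n - E (n+1)` when `d n` is not maximal
(`tail_lt_of_lt`). For `n = 0` this says that `g X` lies in `I_α`, so `g X = f_α X`.

If the digits of `X` and `Y` first differ at `n`, with that of `X` the larger, then the digit of
`X` at `n` is nonzero, so the one at `n+1` is not maximal. Thus
`T (n+1)` of `X` minus `T (n+1)` of `Y` is less than `(E (n+1) - E (n+2)) + E (n+2) = E (n+1)`,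
which is at most the contribution of the digits at `n` (`tail_lt_tail`). The sign `(-1) ^ n`
accounts for the parity of `n`.
-/

/-- `a` is the sequence of partial quotients of the continued fraction expansion
`[a 0; a 1, a 2, …]` of `α`: there is a sequence `θ` of complete quotients with
`θ 0 = α`, `a n = ⌊θ n⌋` and `θ (n+1) = 1/(θ n - ⌊θ n⌋)`. -/
def IsCFExpansion (α : ℝ) (a : ℕ → ℕ) : Prop :=
  ∃ θ : ℕ → ℝ, θ 0 = α ∧
    ∀ n : ℕ, (a n : ℤ) = ⌊θ n⌋ ∧ θ (n + 1) = 1 / (θ n - (⌊θ n⌋ : ℝ))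

/-- `p n / q n` are the convergents of the continued fraction with partial quotients `a`:
`p₋₁ = 1, q₋₁ = 0, p₀ = a₀, q₀ = 1`, and
`pₙ = aₙ pₙ₋₁ + pₙ₋₂`, `qₙ = aₙ qₙ₋₁ + qₙ₋₂` for `n ≥ 1`. -/
def IsConvergents (a p q : ℕ → ℕ) : Prop :=
  p 0 = a 0 ∧ q 0 = 1 ∧ p 1 = a 1 * a 0 + 1 ∧ q 1 = a 1 ∧
  (∀ n : ℕ, p (n + 2) = a (n + 2) * p (n + 1) + p n) ∧
  (∀ n : ℕ, q (n + 2) = a (n + 2) * q (n + 1) + q n)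

/-- `d` is the sequence of Ostrowski digits of `X` in base the continued fraction
with partial quotients `a` and convergent denominators `q`: `d n` is the digit
`b_{n+1}` multiplying `q n`, the digits are eventually zero,
`X = Σ_{n} d n * q n`, `d 0 < a 1`, `d n ≤ a (n+1)` for `n ≥ 1`, and
`d n = 0` whenever `d (n+1) = a (n+2)`. -/
def IsOstrowskiRep (a q : ℕ → ℕ) (X : ℕ) (d : ℕ → ℕ) : Prop :=
  d 0 < a 1 ∧ (∀ n : ℕ, d (n + 1) ≤ a (n + 2)) ∧
  (∀ n : ℕ, d (n + 1) = a (n + 2) → d n = 0) ∧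
  ∃ N : ℕ, (∀ n : ℕ, N ≤ n → d n = 0) ∧ X = ∑ n ∈ Finset.range N, d n * q n

/-- The half-open interval `I_α = [−1/ζ_α, 1 − 1/ζ_α)` where `ζ_α = 1/(α − ⌊α⌋)`. -/
def Ialpha (α : ℝ) : Set ℝ :=
  Set.Ico (-(1 / (1 / (α - (⌊α⌋ : ℝ))))) (1 - 1 / (1 / (α - (⌊α⌋ : ℝ))))

/-- `f` is the function `f_α : ℕ → I_α` with `f_α X` the unique element of `I_α`
such that `α X − f_α X` is a (natural) integer. -/
def IsFracPart (α : ℝ) (f : ℕ → ℝ) : Prop :=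
  ∀ X : ℕ, f X ∈ Ialpha α ∧ ∃ U : ℕ, α * (X : ℝ) - f X = (U : ℝ)

/-- The alternating sum `∑_{k < m} (-1)^k d_{n+k} E_{n+k+1}`, i.e. the `m` terms from index `n` on,
the first one taken with a positive sign. -/
noncomputable def ostTail (E : ℕ → ℝ) (d : ℕ → ℕ) : ℕ → ℕ → ℝ
  | 0, _ => 0
  | m + 1, n => d n * E (n + 1) - ostTail E d m (n + 1)

theorem tail_bounds {a : ℕ → ℕ} {E : ℕ → ℝ} (hE : ∀ n, 0 < E n)
    (hrec : ∀ n, E n = a (n + 1) * E (n + 1) + E (n + 2)) {d : ℕ → ℕ}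
    (hd : ∀ n, d n ≤ a (n + 1)) (m n : ℕ) :
    -E (n + 1) < ostTail E d m n ∧ ostTail E d m n < E n := by
  induction m generalizing n with
  | zero => simpa [ostTail] using ⟨hE (n + 1), hE n⟩
  | succ m ih =>
    obtain ⟨h1, h2⟩ := ih (n + 1)
    have h3 : (d n : ℝ) ≤ a (n + 1) := by exact_mod_cast hd n
    have h4 := mul_le_mul_of_nonneg_right h3 (hE (n + 1)).le
    have h5 : 0 ≤ (d n : ℝ) * E (n + 1) := mul_nonneg (Nat.cast_nonneg _) (hE _).le
    have h6 := hrec n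
    simp only [ostTail]
    constructor <;> linarith

theorem tail_lt_of_lt {a : ℕ → ℕ} {E : ℕ → ℝ} (hE : ∀ n, 0 < E n)
    (hrec : ∀ n, E n = a (n + 1) * E (n + 1) + E (n + 2)) {d : ℕ → ℕ}
    (hd : ∀ n, d n ≤ a (n + 1)) (m n : ℕ) (hlt : d n < a (n + 1)) :
    ostTail E d m n < E n - E (n + 1) := by
  have h6 := hrec n
  have h3 : (d n : ℝ) + 1 ≤ a (n + 1) := by exact_mod_cast hlt
  have h4 := mul_le_mul_of_nonneg_right h3 (hE (n + 1)).le
  have h5 : 0 ≤ (d n : ℝ) * E (n + 1) := mul_nonneg (Nat.cast_nonneg _) (hE _).le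
  cases m with
  | zero =>
    have := hE (n + 2)
    simp only [ostTail]
    linarith
  | succ m =>
    obtain ⟨h1, h2⟩ := tail_bounds hE hrec hd m (n + 1)
    simp only [ostTail]
    linarith

theorem tail_lt_tail {a : ℕ → ℕ} {E : ℕ → ℝ} (hE : ∀ n, 0 < E n)
    (hrec : ∀ n, E n = a (n + 1) * E (n + 1) + E (n + 2)) {d e : ℕ → ℕ}
    (hd : ∀ n, d n ≤ a (n + 1)) (he : ∀ n, e n ≤ a (n + 1))
    (he' : ∀ n, e (n + 1) = a (n + 2) → e n = 0) (m n : ℕ) (hlt : d n < e n) :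
    ostTail E d (m + 1) n < ostTail E e (m + 1) n := by
  have h1 : e (n + 1) < a (n + 2) :=
    lt_of_le_of_ne (he (n + 1)) fun h => by have := he' n h; omega
  have h2 := tail_lt_of_lt hE hrec he m (n + 1) h1
  have h3 := (tail_bounds hE hrec hd m (n + 1)).1
  have h4 : (d n : ℝ) + 1 ≤ e n := by exact_mod_cast hlt
  have h5 := mul_le_mul_of_nonneg_right h4 (hE (n + 1)).le
  simp only [ostTail]
  linarith

theorem tail_sub_tail (E : ℕ → ℝ) {d e : ℕ → ℕ} (m n k : ℕ)
    (h : ∀ i, k ≤ i → i < k + n → d i = e i) :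
    ostTail E d (m + n) k - ostTail E e (m + n) k
      = (-1) ^ n * (ostTail E d m (k + n) - ostTail E e m (k + n)) := by
  induction n generalizing k with
  | zero => simp
  | succ n ih =>
    have h1 := ih (k + 1) fun i hi hi' => h i (by omega) (by omega)
    have h2 := h k le_rfl (by omega)
    rw [show k + 1 + n = k + (n + 1) by ring] at h1
    rw [← add_assoc m n 1]
    simp only [ostTail, h2]
    rw [pow_succ]
    linear_combination -h1

theorem tail_eq_sum (E : ℕ → ℝ) (d : ℕ → ℕ) (m n : ℕ) :
    ostTail E d m n = ∑ k ∈ Finset.range m, (-1) ^ k * (d (n + k) * E (n + k + 1)) := by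
  induction m generalizing n with
  | zero => simp [ostTail]
  | succ m ih =>
    rw [Finset.sum_range_succ']
    simp only [ostTail, ih (n + 1), pow_succ]
    rw [sub_eq_neg_add, ← Finset.sum_neg_distrib]
    simp only [pow_zero, one_mul, add_zero]
    congr 1
    refine Finset.sum_congr rfl fun k _ => ?_
    rw [show n + 1 + k = n + (k + 1) by ring]
    ring

/-- The numbers `E 0 = 1`, `E (n + 1) = |q n * α - p n|`; the witness is
`E (n + 1) = E n / θ (n + 1)`, with `θ` the complete quotients. -/
theorem exists_errors (α : ℝ) (hirr : Irrational α) (a : ℕ → ℕ) (ha : IsCFExpansion α a)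
    (p q : ℕ → ℕ) (hpq : IsConvergents a p q) :
    ∃ E : ℕ → ℝ, (∀ n, 0 < E n) ∧ (∀ n, E n = a (n + 1) * E (n + 1) + E (n + 2)) ∧
      E 0 = 1 ∧ E 1 = α - ⌊α⌋ ∧ ∀ n, q n * α - p n = (-1) ^ n * E (n + 1) := by
  obtain ⟨θ, h0, hθ⟩ := ha
  have hir : ∀ n, Irrational (θ n) := by
    intro n
    induction n with
    | zero => rwa [h0]
    | succ n ih =>
      rw [(hθ n).2, one_div]
      exact (ih.sub_intCast _).inv
  have hfr : ∀ n, 0 < θ n - ⌊θ n⌋ := fun n =>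
    lt_of_le_of_ne (sub_nonneg.2 (Int.floor_le _)) ((hir n).sub_intCast _).ne_zero.symm
  have hpos : ∀ n, 0 < θ (n + 1) := fun n => by
    rw [(hθ n).2]
    exact one_div_pos.2 (hfr n)
  have haθ : ∀ n, (a n : ℝ) = ⌊θ n⌋ := fun n => by
    exact_mod_cast congrArg (Int.cast (R := ℝ)) (hθ n).1
  have hinv : ∀ n, 1 / θ (n + 1) = θ n - a n := fun n => by
    rw [(hθ n).2, one_div_one_div, haθ]
  let E : ℕ → ℝ := fun n => Nat.rec 1 (fun k x => x / θ (k + 1)) n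
  have hE0 : E 0 = 1 := rfl
  have hEs : ∀ n, E (n + 1) = E n / θ (n + 1) := fun n => rfl
  have hE : ∀ n, 0 < E n := by
    intro n
    induction n with
    | zero => rw [hE0]; exact one_pos
    | succ n ih => rw [hEs]; exact div_pos ih (hpos n)
  have hrec : ∀ n, E n = a (n + 1) * E (n + 1) + E (n + 2) := by
    intro n
    have h1 : E n = E (n + 1) * θ (n + 1) := by
      rw [hEs, div_mul_cancel₀ _ (hpos n).ne']
    have h2 : E (n + 2) = E (n + 1) * (θ (n + 1) - a (n + 1)) := by
      rw [hEs (n + 1), div_eq_mul_one_div, hinv]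
    rw [h2, h1]
    ring
  have hE1 : E 1 = α - a 0 := by
    rw [← zero_add 1, hEs 0, hE0, hinv 0, h0]
  obtain ⟨hp0, hq0, hp1, hq1, hp, hq⟩ := hpq
  refine ⟨E, hE, hrec, hE0, by rw [hE1, haθ, h0], ?_⟩
  have key : ∀ n, q n * α - p n = (-1) ^ n * E (n + 1) ∧
      q (n + 1) * α - p (n + 1) = (-1) ^ (n + 1) * E (n + 2) := by
    intro n
    induction n with
    | zero =>
      have h2 := hrec 0
      simp only [zero_add, hE0] at h2
      simp only [zero_add, hp0, hq0, hp1, hq1]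
      push_cast
      constructor
      · linear_combination -hE1
      · linear_combination -(a 1 : ℝ) * hE1 - h2
    | succ n ih =>
      refine ⟨ih.2, ?_⟩
      have h2 := hrec (n + 1)
      rw [hp, hq]
      push_cast
      have h3 := ih.1
      have h4 := ih.2
      simp only [pow_succ] at h3 h4 ⊢
      linear_combination (a (n + 2) : ℝ) * h4 + h3 + (-1) ^ n * h2
  exact fun n => (key n).1

/-- Any truncation of the alternating sum beyond the last nonzero digit computes `f_α`. -/
theorem fracPart_eq_tail {α : ℝ} {a p q : ℕ → ℕ} {E : ℕ → ℝ} (hE : ∀ n, 0 < E n)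
    (hrec : ∀ n, E n = a (n + 1) * E (n + 1) + E (n + 2))
    (hE0 : E 0 = 1) (hE1 : E 1 = α - ⌊α⌋)
    (hqp : ∀ n, q n * α - p n = (-1) ^ n * E (n + 1))
    {f : ℕ → ℝ} (hf : IsFracPart α f) {X : ℕ} {d : ℕ → ℕ} (hd : ∀ n, d n ≤ a (n + 1))
    (hd0 : d 0 < a 1) {N : ℕ} (hN : ∀ n, N ≤ n → d n = 0)
    (hX : X = ∑ n ∈ Finset.range N, d n * q n) {M : ℕ} (hM : N ≤ M) :
    f X = ostTail E d M 0 := by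
  have hX' : X = ∑ n ∈ Finset.range M, d n * q n := by
    rw [hX]
    refine Finset.sum_subset (Finset.range_mono hM) fun n _ hn => ?_
    rw [hN n (by simpa using hn), zero_mul]
  have h1 : α * X - ostTail E d M 0 = ((∑ n ∈ Finset.range M, d n * p n : ℕ) : ℝ) := by
    rw [tail_eq_sum, hX']
    push_cast
    rw [Finset.mul_sum, ← Finset.sum_sub_distrib]
    refine Finset.sum_congr rfl fun n _ => ?_
    rw [zero_add]
    linear_combination (d n : ℝ) * hqp n
  obtain ⟨⟨h2, h3⟩, U, hU⟩ := hf X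
  rw [one_div_one_div, ← hE1] at h2 h3
  have h4 := (tail_bounds hE hrec hd M 0).1
  have h5 := tail_lt_of_lt hE hrec hd M 0 hd0
  rw [hE0] at h5
  simp only [zero_add] at h4 h5
  -- two points of `I_α` congruent modulo `1` coincide
  set V := ∑ n ∈ Finset.range M, d n * p n
  have h6 : (U : ℝ) < V + 1 := by linarith
  have h7 : (V : ℝ) < U + 1 := by linarith
  have h8 : U = V := by
    have h6' : U < V + 1 := by exact_mod_cast h6
    have h7' : V < U + 1 := by exact_mod_cast h7
    omega
  rw [h8] at hU
  linarith

/-- Comparison of `f_α` values is determined by the least significant differing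
Ostrowski digit: if `n` is the smallest index at which the digits of `X` and `Y`
differ, then for even `n`, `f_α X < f_α Y ↔ [q_n](X) < [q_n](Y)`, and for odd
`n`, `f_α X < f_α Y ↔ [q_n](X) > [q_n](Y)`. -/
theorem fracPart_lt_iff_lsd
    (α : ℝ) (hα : 0 < α) (hirr : Irrational α)
    (a : ℕ → ℕ) (ha : IsCFExpansion α a)
    (p q : ℕ → ℕ) (hpq : IsConvergents a p q)
    (ost : ℕ → ℕ → ℕ) (host : ∀ X : ℕ, IsOstrowskiRep a q X (ost X))
    (fα : ℕ → ℝ) (hf : IsFracPart α fα)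
    (X Y n : ℕ) (hXY : X ≠ Y)
    (hdiff : ost X n ≠ ost Y n)
    (hmin : ∀ m : ℕ, m < n → ost X m = ost Y m) :
    (Even n → (fα X < fα Y ↔ ost X n < ost Y n)) ∧
    (Odd n → (fα X < fα Y ↔ ost Y n < ost X n)) := by
  obtain ⟨E, hE, hrec, hE0, hE1, hqp⟩ := exists_errors α hirr a ha p q hpq
  obtain ⟨hX0, hX1, hX2, NX, hNX, hX⟩ := host X
  obtain ⟨hY0, hY1, hY2, NY, hNY, hY⟩ := host Y
  have hdX : ∀ k, ost X k ≤ a (k + 1) := fun k => by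
    cases k with
    | zero => exact hX0.le
    | succ k => exact hX1 k
  have hdY : ∀ k, ost Y k ≤ a (k + 1) := fun k => by
    cases k with
    | zero => exact hY0.le
    | succ k => exact hY1 k
  -- a common truncation, long enough for both numbers and reaching index `n`
  have hfX := fracPart_eq_tail hE hrec hE0 hE1 hqp hf hdX hX0 hNX hX
    (M := NX + NY + 1 + n) (by omega)
  have hfY := fracPart_eq_tail hE hrec hE0 hE1 hqp hf hdY hY0 hNY hY
    (M := NX + NY + 1 + n) (by omega)
  have hsub := tail_sub_tail E (NX + NY + 1) n 0 (d := ost X) (e := ost Y)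
    fun i _ hi => hmin i (by omega)
  rw [← hfX, ← hfY, zero_add] at hsub
  have hlt := tail_lt_tail hE hrec hdX hdY hY2 (NX + NY) n
  have hgt := tail_lt_tail hE hrec hdY hdX hX2 (NX + NY) n
  refine ⟨fun hn => ?_, fun hn => ?_⟩
  · rw [hn.neg_one_pow, one_mul] at hsub
    rcases lt_or_gt_of_ne hdiff with h | h
    · exact ⟨fun _ => h, fun _ => by linarith [hlt h]⟩
    · exact ⟨fun h1 => by linarith [hgt h], fun h1 => by omega⟩
  · rw [hn.neg_one_pow] at hsub
    rcases lt_or_gt_of_ne hdiff with h | h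
    · exact ⟨fun h1 => by linarith [hlt h], fun h1 => by omega⟩
    · exact ⟨fun _ => h, fun _ => by linarith [hgt h]⟩
end

section
/- Let X ∈ ℕ and n ∈ ℕ. Then [q_n](X) = 0 if and only if there exist Z1, Z2 ∈ ℕ with X = Z1 + Z2 such that [q_m](Z1) = 0 for all m ≥ n and [q_m](Z2) = 0 for all m ≤ n. -/
/-- Partial sums of an admissible digit sequence stay below the next denominator. -/
lemma ostrowski_partial_sum_lt {a p q : ℕ → ℕ} (hpq : IsConvergents a p q) {d : ℕ → ℕ}
    (h0 : d 0 < a 1) (h1 : ∀ n, d (n + 1) ≤ a (n + 2))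
    (h2 : ∀ n, d (n + 1) = a (n + 2) → d n = 0) (N : ℕ) :
    ∑ i ∈ Finset.range N, d i * q i < q N := by
  obtain ⟨-, q0, -, q1, -, qr⟩ := hpq
  induction N using Nat.twoStepInduction with
  | zero => simp [q0]
  | one => simpa [q0, q1] using h0
  | more N ih ih' =>
    rw [Finset.sum_range_succ, qr]
    rcases (h1 N).eq_or_lt with h | h
    · -- A maximal digit forces the previous one to vanish, so the bound at `N` suffices.
      rw [Finset.sum_range_succ, h2 N h, h]
      omega
    · have : (d (N + 1) + 1) * q (N + 1) ≤ a (N + 2) * q (N + 1) := Nat.mul_le_mul_right _ h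
      rw [Nat.add_mul] at this
      omega

lemma ostrowski_partial_sum_inj {q d e : ℕ → ℕ}
    (hd : ∀ N, ∑ i ∈ Finset.range N, d i * q i < q N)
    (he : ∀ N, ∑ i ∈ Finset.range N, e i * q i < q N) (N : ℕ)
    (h : ∑ i ∈ Finset.range N, d i * q i = ∑ i ∈ Finset.range N, e i * q i) :
    ∀ i < N, d i = e i := by
  induction N with
  | zero => simp
  | succ N ih =>
    have hq : 0 < q N := (Nat.zero_le _).trans_lt (hd N)
    rw [Finset.sum_range_succ, Finset.sum_range_succ] at h
    have hN : d N = e N := by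
      have := congrArg (· / q N) h
      simpa [Nat.add_mul_div_right _ _ hq, Nat.div_eq_of_lt (hd N), Nat.div_eq_of_lt (he N)]
        using this
    rw [hN] at h
    intro i hi
    rcases (Nat.lt_succ_iff_lt_or_eq.mp hi) with hi | rfl
    · exact ih (by omega) i hi
    · exact hN

lemma sum_range_eq_of_zero {f : ℕ → ℕ} {N M : ℕ} (hf : ∀ n, N ≤ n → f n = 0) (hNM : N ≤ M) :
    ∑ i ∈ Finset.range N, f i = ∑ i ∈ Finset.range M, f i :=
  Finset.sum_subset (by simpa using hNM) fun i _ hi => hf i (by simpa using hi)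

/-- The bound of an Ostrowski representation may be enlarged arbitrarily. -/
lemma IsOstrowskiRep.exists_bound {a q d : ℕ → ℕ} {X : ℕ} (h : IsOstrowskiRep a q X d) :
    ∃ N, ∀ M, N ≤ M → (∀ n, M ≤ n → d n = 0) ∧ X = ∑ n ∈ Finset.range M, d n * q n := by
  obtain ⟨-, -, -, N, hN, hX⟩ := h
  refine ⟨N, fun M hM => ⟨fun n hn => hN n (hM.trans hn), hX.trans ?_⟩⟩
  exact sum_range_eq_of_zero (fun n hn => by simp [hN n hn]) hM

lemma IsOstrowskiRep.unique {a p q d e : ℕ → ℕ} {X : ℕ} (hpq : IsConvergents a p q)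
    (hd : IsOstrowskiRep a q X d) (he : IsOstrowskiRep a q X e) (i : ℕ) : d i = e i := by
  obtain ⟨N, hN⟩ := hd.exists_bound
  obtain ⟨M, hM⟩ := he.exists_bound
  have h1 := (hN (N + M + i + 1) (by omega)).2
  have h2 := (hM (N + M + i + 1) (by omega)).2
  exact ostrowski_partial_sum_inj (ostrowski_partial_sum_lt hpq hd.1 hd.2.1 hd.2.2.1)
    (ostrowski_partial_sum_lt hpq he.1 he.2.1 he.2.2.1) _ (h1.symm.trans h2) i (by omega)

/-- `[q_n](X) = 0` iff `X = Z1 + Z2` for some `Z1, Z2` with all Ostrowski digits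
of `Z1` at indices `≥ n` zero and all Ostrowski digits of `Z2` at indices `≤ n`
zero. -/
theorem ostrowski_digit_zero_iff_split
    (α : ℝ) (hα : 0 < α) (hirr : Irrational α)
    (a : ℕ → ℕ) (ha : IsCFExpansion α a)
    (p q : ℕ → ℕ) (hpq : IsConvergents a p q)
    (ost : ℕ → ℕ → ℕ) (host : ∀ X : ℕ, IsOstrowskiRep a q X (ost X))
    (X n : ℕ) :
    ost X n = 0 ↔
      ∃ Z1 Z2 : ℕ, X = Z1 + Z2 ∧
        (∀ m : ℕ, n ≤ m → ost Z1 m = 0) ∧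
        (∀ m : ℕ, m ≤ n → ost Z2 m = 0) := by
  constructor
  · intro hn
    have hX := host X
    obtain ⟨N, hN⟩ := hX.exists_bound
    obtain ⟨hz, hs⟩ := hN N le_rfl
    obtain ⟨h0, h1, h2, -⟩ := hX
    set d := ost X
    let e : ℕ → ℕ := fun i => if i < n then d i else 0
    let f : ℕ → ℕ := fun i => if i ≤ n then 0 else d i
    have he : IsOstrowskiRep a q (∑ i ∈ Finset.range N, e i * q i) e := by
      refine ⟨?_, fun k => ?_, fun k hk => ?_, N, fun k hk => ?_, rfl⟩
      · simp only [e]; split_ifs <;> omega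
      · have := h1 k
        simp only [e]; split_ifs <;> omega
      · simp only [e] at hk ⊢
        by_cases c : k + 1 < n
        · rw [if_pos c] at hk
          simp [h2 k hk]
        · rw [if_neg c] at hk
          by_cases hkn : k < n
          · -- Here `k + 1 = n` and `a (k + 2) = 0 = d n`, so `d k` vanishes as well.
            have : k + 1 = n := by omega
            rw [if_pos hkn]
            exact h2 k (by rw [this, hn]; exact hk)
          · rw [if_neg hkn]
      · simp [e, hz k hk]
    have hf : IsOstrowskiRep a q (∑ i ∈ Finset.range N, f i * q i) f := by
      refine ⟨?_, fun k => ?_, fun k hk => ?_, N, fun k hk => ?_, rfl⟩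
      · simp only [f]; split_ifs <;> omega
      · have := h1 k
        simp only [f]; split_ifs <;> omega
      · simp only [f] at hk ⊢
        by_cases c : k ≤ n
        · rw [if_pos c]
        · rw [if_neg c]
          rw [if_neg (by omega)] at hk
          exact h2 k hk
      · simp [f, hz k hk]
    refine ⟨_, _, ?_, fun m hm => ((host _).unique hpq he m).trans ?_,
      fun m hm => ((host _).unique hpq hf m).trans ?_⟩
    · rw [hs, ← Finset.sum_add_distrib]
      refine Finset.sum_congr rfl fun i _ => ?_
      rw [← Nat.add_mul]
      congr 1
      simp only [e, f]
      rcases lt_trichotomy i n with h | rfl | h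
      · simp [h, h.le]
      · simp [hn]
      · simp [h.not_ge, h.not_gt]
    · simp [e, hm]
    · simp [f, hm]
  · rintro ⟨Z1, Z2, rfl, hZ1, hZ2⟩
    have r1 := host Z1
    have r2 := host Z2
    obtain ⟨N, hN⟩ := r1.exists_bound
    obtain ⟨M, hM⟩ := r2.exists_bound
    obtain ⟨z1, s1⟩ := hN (N + M) (by omega)
    obtain ⟨z2, s2⟩ := hM (N + M) (by omega)
    obtain ⟨u0, u1, u2, -⟩ := r1
    obtain ⟨v0, v1, v2, -⟩ := r2
    have hg : IsOstrowskiRep a q (Z1 + Z2) (fun i => ost Z1 i + ost Z2 i) := by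
      refine ⟨?_, fun k => ?_, fun k hk => ?_, N + M, fun k hk => ?_, ?_⟩
      · simpa [hZ2 0 (Nat.zero_le n)] using u0
      · rcases le_total n (k + 1) with h | h
        · simpa [hZ1 _ h] using v1 k
        · simpa [hZ2 _ h] using u1 k
      · simp only at hk ⊢
        rcases le_or_gt (k + 1) n with h | h
        · have hz : ost Z2 (k + 1) = 0 := hZ2 _ h
          have := u2 k (by omega)
          have := hZ2 k (by omega)
          omega
        · have hz : ost Z1 (k + 1) = 0 := hZ1 _ h.le
          have := v2 k (by omega)
          have := hZ1 k (by omega)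
          omega
      · simp [z1 k hk, z2 k hk]
      · conv_lhs => rw [s1, s2]
        simp [Nat.add_mul, Finset.sum_add_distrib]
    rw [(host _).unique hpq hg n, hZ1 n le_rfl, hZ2 n le_rfl]
end
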